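/- Let n ≥ 0 and a ∈ P_n(G,A). Then D^n a is an n-cocycle of G with values in A^G for the trivial G-action: all values [D^n a](g_1,…,g_n) lie in A^G, and δ^n(D^n a) = 0. -/

import Mathlib

/-- The iterated difference operator `D^n` associated with a right `G`-action
`act : A → G → A` on an additive abelian group `A`. -/
def iterD {A G : Type*} [AddCommGroup A] [Group G] (act : A → G → A) :
    (n : ℕ) → A → (Fin n → G) → A
  | 0, a, _ => a
  | n + 1, a, g =>
      act (iterD act n a (fun i => g i.castSucc)) (g (Fin.last n))
        - iterD act n a (fun i => g i.castSucc)

/-- The coboundary operator `δⁿ : Cⁿ(G,A) → C^{n+1}(G,A)` for the trivial left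
`G`-action on `A`. -/
def coboundary {G A : Type*} [Group G] [AddCommGroup A] (n : ℕ)
    (c : (Fin n → G) → A) : (Fin (n + 1) → G) → A := fun g =>
  c (fun i => g i.succ)
    + (∑ i : Fin n, ((-1 : ℤ) ^ ((i : ℕ) + 1)) •
        c (fun j => if (j : ℕ) < (i : ℕ) then g j.castSucc
            else if j = i then g i.castSucc * g i.succ
            else g j.succ))
    + ((-1 : ℤ) ^ (n + 1)) • c (fun i => g i.castSucc)

/-!
Adjacent factors in `Dⁿ` are related by `gh - 1 = (g - 1) + (h - 1) + (g - 1)(h - 1)` in the group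
ring. Hence multiplying the entries `i` and `i + 1` of an `(n + 1)`-tuple `g` turns `Dⁿ a` into the
sum of its values at `g` without entry `i` and at `g` without entry `i + 1`, plus `[Dⁿ⁺¹ a](g)`.
In the alternating sum `δⁿ (Dⁿ a)` the first two kinds of terms telescope against the outer faces,
which leaves `0` for even `n` and `-[Dⁿ⁺¹ a](g)` for odd `n`.
-/

section Tuples

variable {α : Type*} {n : ℕ}

theorem init_removeNth_castSucc (i : Fin (n + 1)) (g : Fin (n + 2) → α) :
    Fin.init (i.castSucc.removeNth g) = i.removeNth (Fin.init g) := by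
  funext k
  simp only [Fin.init, Fin.removeNth_apply, Fin.castSucc_succAbove_castSucc]

theorem removeNth_castSucc_apply_last (i : Fin (n + 1)) (g : Fin (n + 2) → α) :
    i.castSucc.removeNth g (Fin.last n) = g (Fin.last (n + 1)) := by
  rw [Fin.removeNth_apply, Fin.succAbove_castSucc_of_le _ _ i.le_last, Fin.succ_last]

theorem contractNth_last (op : α → α → α) (g : Fin (n + 1) → α) :
    (Fin.last n).contractNth op g = Fin.init g :=
  funext fun k => Fin.contractNth_apply_of_lt _ op g k k.isLt

theorem init_contractNth_castSucc (i : Fin (n + 1)) (op : α → α → α) (g : Fin (n + 2) → α) :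
    Fin.init (i.castSucc.contractNth op g) = i.contractNth op (Fin.init g) :=
  rfl

end Tuples

theorem sum_neg_one_pow_smul_add_succ {A : Type*} [AddCommGroup A] {n : ℕ} (f : Fin (n + 1) → A) :
    ∑ i : Fin n, (-1 : ℤ) ^ ((i : ℕ) + 1) • (f i.castSucc + f i.succ) =
      (-1 : ℤ) ^ n • f (Fin.last n) - f 0 := by
  induction n with
  | zero => simp
  | succ n ih =>
    have hinit := ih fun i => f i.castSucc
    rw [Fin.castSucc_zero] at hinit
    simp only [Fin.sum_univ_castSucc, Fin.val_castSucc, Fin.val_last, Fin.succ_castSucc,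
      Fin.succ_last, hinit]
    rw [pow_succ, mul_neg_one, neg_smul, neg_smul, smul_add]
    abel

theorem act_sub_of_act_add {A G : Type*} [AddCommGroup A] {act : A → G → A}
    (hadd : ∀ (a b : A) (g : G), act (a + b) g = act a g + act b g) (a b : A) (g : G) :
    act (a - b) g = act a g - act b g :=
  map_sub (AddMonoidHom.mk' (act · g) (hadd · · g)) a b

section IterD

variable {A G : Type*} [AddCommGroup A] [Group G]

theorem coboundary_eq_sum_contractNth {n : ℕ} (c : (Fin n → G) → A) (g : Fin (n + 1) → G) :
    coboundary n c g = c (Fin.tail g)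
      + ∑ i : Fin n, (-1 : ℤ) ^ ((i : ℕ) + 1) • c (i.castSucc.contractNth (· * ·) g)
      + (-1 : ℤ) ^ (n + 1) • c (Fin.init g) := by
  have hcontract (i : Fin n) :
      (fun j : Fin n => if (j : ℕ) < (i : ℕ) then g j.castSucc
        else if j = i then g i.castSucc * g i.succ else g j.succ) =
      i.castSucc.contractNth (· * ·) g := by
    funext j
    simp only [Fin.contractNth, Fin.val_castSucc, ← Fin.ext_iff]
    split_ifs with _ hj
    exacts [rfl, hj ▸ rfl, rfl]
  simp only [coboundary, hcontract]
  rfl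

variable (act : A → G → A)

theorem iterD_succ (n : ℕ) (a : A) (g : Fin (n + 1) → G) :
    iterD act (n + 1) a g =
      act (iterD act n a (Fin.init g)) (g (Fin.last n)) - iterD act n a (Fin.init g) :=
  rfl

theorem act_iterD_of_iterD_succ_eq_zero {n : ℕ} {a : A}
    (ha : ∀ g : Fin (n + 1) → G, iterD act (n + 1) a g = 0) (x : G) (g : Fin n → G) :
    act (iterD act n a g) x = iterD act n a g := by
  have hsnoc := ha (Fin.snoc g x)
  rwa [iterD_succ, Fin.init_snoc, Fin.snoc_last, sub_eq_zero] at hsnoc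

variable {act} (hadd : ∀ (a b : A) (g : G), act (a + b) g = act a g + act b g)
  (hcomp : ∀ (a : A) (g h : G), act (act a g) h = act a (g * h))

include hadd hcomp

theorem iterD_contractNth (a : A) {n : ℕ} (i : Fin n) (g : Fin (n + 1) → G) :
    iterD act n a (i.castSucc.contractNth (· * ·) g) =
      iterD act n a (i.castSucc.removeNth g) + iterD act n a (i.succ.removeNth g)
        + iterD act (n + 1) a g := by
  induction n with
  | zero => exact i.elim0
  | succ n ih =>
    cases i using Fin.lastCases with
    | last =>
      have hlast : (Fin.last n).castSucc.contractNth (· * ·) g (Fin.last n) =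
          Fin.init g (Fin.last n) * g (Fin.last (n + 1)) :=
        Fin.contractNth_apply_of_eq _ _ g _ rfl
      simp only [iterD_succ, init_contractNth_castSucc, contractNth_last, hlast,
        init_removeNth_castSucc, removeNth_castSucc_apply_last, Fin.succ_last, Fin.removeNth_last,
        act_sub_of_act_add hadd, hcomp]
      abel
    | cast i =>
      have hlast : i.castSucc.castSucc.contractNth (· * ·) g (Fin.last n) = g (Fin.last (n + 1)) :=
        Fin.contractNth_apply_of_gt _ _ g _ i.isLt
      rw [iterD_succ, init_contractNth_castSucc, hlast, ih, iterD_succ act n a (Fin.removeNth _ g),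
        iterD_succ act n a (Fin.removeNth _ g), iterD_succ act (n + 1), Fin.succ_castSucc]
      simp only [init_removeNth_castSucc, removeNth_castSucc_apply_last, hadd]
      abel

theorem coboundary_iterD (n : ℕ) (a : A) (g : Fin (n + 1) → G) :
    coboundary n (iterD act n a) g = if Even n then 0 else -iterD act (n + 1) a g := by
  have hsigns : ∑ i : Fin n, (-1 : ℤ) ^ ((i : ℕ) + 1) = if Even n then 0 else -1 := by
    simp only [pow_succ, ← Finset.sum_mul, Fin.sum_neg_one_pow]
    split_ifs <;> rfl
  have htelescope := sum_neg_one_pow_smul_add_succ fun i => iterD act n a (i.removeNth g)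
  rw [Fin.removeNth_last, Fin.removeNth_zero] at htelescope
  have hsum : ∑ i : Fin n, (-1 : ℤ) ^ ((i : ℕ) + 1) •
        iterD act n a (i.castSucc.contractNth (· * ·) g) =
      (-1 : ℤ) ^ n • iterD act n a (Fin.init g) - iterD act n a (Fin.tail g)
        + (if Even n then (0 : ℤ) else -1) • iterD act (n + 1) a g := by
    simp_rw [iterD_contractNth hadd hcomp, smul_add _ (_ + _), Finset.sum_add_distrib, htelescope,
      ← Finset.sum_smul, hsigns]
  rw [coboundary_eq_sum_contractNth, hsum, pow_succ, mul_neg_one, neg_smul, ite_smul, zero_smul,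
    neg_one_smul]
  abel

end IterD

/-- Let `n ≥ 0` and `a ∈ P_n(G,A)` (i.e. `D^{n+1} a = 0`).
Then `Dⁿ a` is an `n`-cocycle of `G` with values in `A^G` for the trivial
`G`-action: all values of `Dⁿ a` are `G`-invariant and `δⁿ (Dⁿ a) = 0`. -/
theorem stmt_12 {A G : Type*} [AddCommGroup A] [Group G] (act : A → G → A)
    (hadd : ∀ (a b : A) (g : G), act (a + b) g = act a g + act b g)
    (hone : ∀ a : A, act a 1 = a)
    (hcomp : ∀ (a : A) (g h : G), act (act a g) h = act a (g * h))
    (n : ℕ) (a : A)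
    (ha : ∀ g : Fin (n + 1) → G, iterD act (n + 1) a g = 0) :
    (∀ (g : G) (gs : Fin n → G),
        act (iterD act n a gs) g = iterD act n a gs) ∧
      (∀ g : Fin (n + 1) → G, coboundary n (iterD act n a) g = 0) := by
  refine ⟨act_iterD_of_iterD_succ_eq_zero act ha, fun g => ?_⟩
  rw [coboundary_iterD hadd hcomp, ha, neg_zero, ite_self]
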